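/- Let n ≥ 2 and t = (t₁, …, t_{n−1}) ∈ ℝ^{n−1} with |t_j| < 1 for all j. Then for every g ∈ SL(n,ℝ) the real symmetric matrix Re(g·m(it)·m(it)ᵀ·gᵀ) is positive definite. In particular 𝒩⁺·x₀ ⊆ Ξ₀ and hence G·𝒩⁺·x₀ ⊆ Ξ₀ ⊆ Ξ, where 𝒩⁺ = {m(it) : |t_j| < 1 for all j}. -/

import Mathlib

open Matrix

/-- for `n ≥ 2` and `t ∈ ℝ^{n-1}` with all `|t_j| < 1`, and every
`g ∈ SL(n,ℝ)`, the real symmetric matrix `Re(g·m(it)·m(it)ᵀ·gᵀ)` is positive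
definite; in particular `g·m(it)·m(it)ᵀ·gᵀ` lies in the determinant-one tube cut
`Ξ₀ = {Z symmetric, det Z = 1, Re Z ≫ 0}` of `X_ℂ`, i.e. `G·𝒩⁺·x₀ ⊆ Ξ₀ ⊆ Ξ`. -/
theorem stmt_13 (n : ℕ) (hn : 2 ≤ n) (t : Fin (n - 1) → ℝ) (ht : ∀ j, |t j| < 1)
    (g : Matrix (Fin n) (Fin n) ℝ) (hg : g.det = 1) :
    let tt : Fin n → ℝ := fun j => if h : (j : ℕ) < n - 1 then t ⟨j, h⟩ else 0
    let M : Matrix (Fin n) (Fin n) ℂ :=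
      1 + Matrix.of (fun j k : Fin n =>
        if (j : ℕ) + 1 = (k : ℕ) then Complex.I * (tt j : ℂ) else 0)
    let gc : Matrix (Fin n) (Fin n) ℂ := g.map (fun x : ℝ => (x : ℂ))
    let W : Matrix (Fin n) (Fin n) ℂ := gc * M * Mᵀ * gcᵀ
    (W.map Complex.re).PosDef ∧ W.IsSymm ∧ W.det = 1 := by
  intro tt M gc W
  have htt : ∀ j, tt j ^ 2 < 1 := by
    intro j
    rw [sq_lt_one_iff_abs_lt_one]
    by_cases h : (j : ℕ) < n - 1
    · simp only [tt, h, dif_pos]; exact ht _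
    · simp [tt, h]
  have httl : ∀ j : Fin n, ¬ (j : ℕ) < n - 1 → tt j = 0 := by
    intro j h
    simp [tt, h]
  clear_value tt
  let T : Matrix (Fin n) (Fin n) ℝ :=
    Matrix.of (fun j k : Fin n => if (j : ℕ) + 1 = (k : ℕ) then tt j else 0)
  have hTT : T * Tᵀ = Matrix.diagonal (fun j => tt j ^ 2) := by
    ext j k
    rw [Matrix.mul_apply]
    by_cases h : (j : ℕ) < n - 1
    · rw [Finset.sum_eq_single (⟨(j : ℕ) + 1, by omega⟩ : Fin n)]
      · by_cases hjk : j = k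
        · subst hjk
          simp [T, sq]
        · have : ¬ ((k : ℕ) = j) := fun h => hjk (Fin.ext h.symm)
          simp [T, hjk, this]
      · intro b _ hb
        have : ¬ ((j : ℕ) + 1 = b) := fun h => hb (Fin.ext h.symm)
        simp [T, this]
      · simp
    · by_cases hjk : j = k
      · subst hjk
        simp [T, httl j h]
      · simp [T, httl j h, hjk]
  have hM : M = 1 + Complex.I • T.map Complex.ofRealHom := by
    ext j k
    simp [M, T, apply_ite Complex.ofReal]
  have hgc : gc = g.map Complex.ofRealHom := rfl
  have hW : W = (g * (1 - T * Tᵀ) * gᵀ).map Complex.ofRealHom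
      + Complex.I • (g * (T + Tᵀ) * gᵀ).map Complex.ofRealHom := by
    have e1 : (1 - T * Tᵀ).map Complex.ofRealHom
        = 1 - T.map Complex.ofRealHom * (T.map Complex.ofRealHom)ᵀ := by
      rw [Matrix.map_sub _ (map_sub _), Matrix.map_mul, Matrix.map_one _ (map_zero _) (map_one _)]
      rfl
    have e2 : (T + Tᵀ).map Complex.ofRealHom
        = T.map Complex.ofRealHom + (T.map Complex.ofRealHom)ᵀ := by
      rw [Matrix.map_add _ (map_add _)]
      rfl
    have e3 : gᵀ.map Complex.ofRealHom = (g.map Complex.ofRealHom)ᵀ := rfl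
    rw [Matrix.map_mul, Matrix.map_mul, Matrix.map_mul, Matrix.map_mul, e1, e2, e3, ← hgc]
    simp only [W, hM]
    generalize T.map Complex.ofRealHom = S
    have e4 : (1 + Complex.I • S) * (1 + Complex.I • S)ᵀ
        = (1 - S * Sᵀ) + Complex.I • (S + Sᵀ) := by
      simp only [Matrix.transpose_add, Matrix.transpose_one, Matrix.transpose_smul,
        add_mul, mul_add, one_mul, mul_one, smul_mul_assoc, mul_smul_comm, smul_smul,
        Complex.I_mul_I, smul_add, neg_smul, one_smul]
      abel
    rw [Matrix.mul_assoc gc, e4]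
    simp only [mul_add, add_mul, smul_mul_assoc, mul_smul_comm]
  have hre : W.map Complex.re = g * (1 - T * Tᵀ) * gᵀ := by
    rw [hW]
    ext j k
    simp only [Matrix.map_apply, Matrix.add_apply, Matrix.smul_apply, smul_eq_mul]
    simp
  refine ⟨?_, ?_, ?_⟩
  · rw [hre, hTT]
    have hd : (1 - Matrix.diagonal (fun j => tt j ^ 2) : Matrix (Fin n) (Fin n) ℝ)
        = Matrix.diagonal (fun j => 1 - tt j ^ 2) := by
      rw [← Matrix.diagonal_one, Matrix.diagonal_sub]
    rw [hd]
    have hp : (Matrix.diagonal (fun j => 1 - tt j ^ 2)).PosDef :=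
      Matrix.PosDef.diagonal (fun j => by linarith [htt j])
    have hu : IsUnit g := by
      rw [Matrix.isUnit_iff_isUnit_det, hg]; exact isUnit_one
    have := hp.mul_mul_conjTranspose_same (B := g) (Matrix.vecMul_injective_of_isUnit hu)
    rwa [Matrix.conjTranspose_eq_transpose_of_trivial] at this
  · simp only [Matrix.IsSymm, W, Matrix.transpose_mul, Matrix.transpose_transpose,
      Matrix.mul_assoc]
  · have hgd : gc.det = 1 := by
      rw [hgc]
      have := (RingHom.map_det Complex.ofRealHom g).symm
      rw [hg, map_one] at this
      exact this
    have hMd : M.det = 1 := by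
      rw [Matrix.det_of_upperTriangular]
      · apply Finset.prod_eq_one
        intro i _
        simp [M]
      · intro i j hij
        have h1 : i ≠ j := fun h => by subst h; exact lt_irrefl _ hij
        have h2 : ¬ ((i : ℕ) + 1 = j) := by
          have : (j : ℕ) < i := hij
          omega
        simp [M, h1, h2]
    simp [W, Matrix.det_mul, Matrix.det_transpose, hgd, hMd]
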